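/- Let g be a Lie algebra acting on ℂ[[t₁,…,tₙ]]-valued formal differential forms Ω^p via Lie derivative. For each i ≥ 1, the cochain a_i ∈ C^{2i−1}(vect(n); O) defined by a_i(X₁,…,X_{2i−1}) = alternation of Tr(JX₁ ⋯ JX_{2i−1}), where JX denotes the formal Jacobian matrix with entries in ℂ[[t₁,…,tₙ]], is a Chevalley–Eilenberg cocycle of degree 2i−1 with coefficients in O = ℂ[[t₁,…,tₙ]]. -/

import Mathlib

/- STATEMENT 8: For each i ≥ 1, the cochain aᵢ ∈ C^{2i−1}(vect(n); O) given by the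
alternation of (X₁,…,X_{2i−1}) ↦ Tr(JX₁ ⋯ JX_{2i−1}) is a Chevalley–Eilenberg cocycle of
degree 2i−1 with coefficients in O = ℂ[[t₁,…,tₙ]] (vect(n) acting by derivations). -/

open MvPowerSeries

/-- O = ℂ[[t₁,…,tₙ]] -/
abbrev O (n : ℕ) := MvPowerSeries (Fin n) ℂ

/-- partial derivative ∂ᵢ on formal power series, defined coefficientwise -/
noncomputable def pd {n : ℕ} (i : Fin n) (f : O n) : O n :=
  fun m => ((m i : ℂ) + 1) * f (m + Finsupp.single i 1)

/-- vect(n): formal vector fields X = Σᵢ fᵢ∂ᵢ recorded by their coefficient tuples -/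
abbrev Vn (n : ℕ) := Fin n → O n

/-- the Lie bracket of formal vector fields -/
noncomputable def br {n : ℕ} (X Y : Vn n) : Vn n :=
  fun j => ∑ i, (X i * pd i (Y j) - Y i * pd i (X j))

/-- the action of a formal vector field on O by derivation, X·f = Σᵢ fᵢ ∂ᵢf -/
noncomputable def act {n : ℕ} (X : Vn n) (f : O n) : O n := ∑ i, X i * pd i f

/-- the formal Jacobian J : vect(n) → gl(n, O), (JX)ᵢⱼ = ∂ᵢfⱼ -/
noncomputable def Jac {n : ℕ} (X : Vn n) : Matrix (Fin n) (Fin n) (O n) :=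
  fun i j => pd i (X j)

/-- the Chevalley–Eilenberg differential on cochains of vect(n) with values in O, the module
action being act: (dφ)(X₀,…,X_k) = Σᵢ (−1)ⁱ Xᵢ·φ(…,X̂ᵢ,…) + Σ_{i<j} (−1)^{i+j} φ(⁅Xᵢ,Xⱼ⁆,…). -/
noncomputable def dCEO {n : ℕ} : ∀ {k : ℕ}, ((Fin k → Vn n) → O n) → ((Fin (k + 1) → Vn n) → O n)
  | 0, φ => fun x => act (x 0) (φ ![])
  | (k + 1), φ => fun x =>
      (∑ i : Fin (k + 2), ((-1 : ℤ) ^ (i : ℕ)) • act (x i) (φ (i.removeNth x)))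
      + ∑ i : Fin (k + 2), ∑ j : Fin (k + 2),
          if _h : i < j then
            ((-1 : ℤ) ^ ((i : ℕ) + (j : ℕ))) •
              φ (Fin.cons (br (x i) (x j))
                ((⟨i, by omega⟩ : Fin (k + 1)).removeNth (j.removeNth x)))
          else 0

/-- the cochain aᵢ : the alternation of (X₁,…,X_{2i−1}) ↦ Tr(JX₁ ⋯ JX_{2i−1}) -/
noncomputable def aCochain {n : ℕ} (i : ℕ) : (Fin (2 * i - 1) → Vn n) → O n :=
  fun X => ∑ σ : Equiv.Perm (Fin (2 * i - 1)),
    (Equiv.Perm.sign σ : ℤ) • Matrix.trace (List.ofFn (fun k => Jac (X (σ k)))).prod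

/-! The Jacobian is a Maurer–Cartan form: `J⁅X, Y⁆ = X·JY - Y·JX + [JX, JY]`. Expanding
`d(Tr J^{k+1})` for even `k`, the derivative terms of the action part and of the bracket part
cancel, and what is left is a multiple of `Tr J^{k+2}`, the alternation of a trace of an even number
of factors. Rotating the factors by one place keeps the trace and is an odd permutation, so this
alternation vanishes. -/

open Equiv (Perm)

section Alternation

variable {V M N : Type*} [AddCommGroup M] [AddCommGroup N] {m k : ℕ}

/-- The antisymmetrisation `∑ σ, sign σ • G (x ∘ σ)` of a cochain `G`, without the factor `1 / m!`,
as an additive map on not necessarily multilinear cochains. -/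
def alternation : ((Fin m → V) → M) →+ ((Fin m → V) → M) where
  toFun G x := ∑ σ : Perm (Fin m), (Perm.sign σ : ℤ) • G (x ∘ σ)
  map_zero' := by ext; simp
  map_add' G H := by ext; simp [smul_add, Finset.sum_add_distrib]

theorem alternation_apply (G : (Fin m → V) → M) (x : Fin m → V) :
    alternation G x = ∑ σ : Perm (Fin m), (Perm.sign σ : ℤ) • G (x ∘ σ) :=
  rfl

theorem alternation_apply_symm (G : (Fin m → V) → M) (x : Fin m → V) :
    alternation G x = ∑ σ : Perm (Fin m), (Perm.sign σ : ℤ) • G (x ∘ σ.symm) := by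
  rw [alternation_apply, ← Equiv.sum_comp (Equiv.inv (Perm (Fin m)))]
  simp

theorem map_alternation (f : M →+ N) (G : (Fin m → V) → M) (x : Fin m → V) :
    f (alternation G x) = alternation (fun y => f (G y)) x := by
  simp only [alternation_apply, map_sum, map_zsmul]

theorem alternation_precomp_perm (π : Perm (Fin m)) (G : (Fin m → V) → M) (x : Fin m → V) :
    alternation (fun y => G (y ∘ π)) x = (Perm.sign π : ℤ) • alternation G x := by
  simp only [alternation_apply, Finset.smul_sum]
  refine Fintype.sum_equiv (Equiv.mulRight π) _ _ fun σ => ?_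
  have hsign : (Perm.sign π : ℤ) * Perm.sign (σ * π) = Perm.sign σ := by
    rw [Perm.sign_mul, ← Units.val_mul, mul_left_comm, Int.units_mul_self, mul_one]
  rw [Equiv.coe_mulRight, smul_smul, hsign, Perm.coe_mul, Function.comp_assoc]

theorem bijective_mul_decomposeFin_symm {c : Fin (m + 1) → Perm (Fin (m + 1))}
    (hc : ∀ p, c p 0 = p) :
    Function.Bijective fun q : Fin (m + 1) × Perm (Fin m) =>
      c q.1 * Perm.decomposeFin.symm (0, q.2) := by
  rw [Fintype.bijective_iff_injective_and_card]
  refine ⟨?_, (Fintype.card_congr Perm.decomposeFin).symm⟩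
  rintro ⟨p, τ⟩ ⟨p', τ'⟩ h
  obtain rfl : p = p' := by simpa [hc] using congrArg (fun σ : Perm (Fin (m + 1)) => σ 0) h
  simpa using h

theorem sum_perm_eq_sum_sum_mul_decomposeFin_symm {R : Type*} [AddCommMonoid R]
    {c : Fin (m + 1) → Perm (Fin (m + 1))} (hc : ∀ p, c p 0 = p) (f : Perm (Fin (m + 1)) → R) :
    ∑ σ, f σ = ∑ p, ∑ τ : Perm (Fin m), f (c p * Perm.decomposeFin.symm (0, τ)) := by
  rw [← (bijective_mul_decomposeFin_symm hc).sum_comp, Fintype.sum_prod_type]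

theorem cons_comp_decomposeFin_symm (a : V) (z : Fin m → V) (τ : Perm (Fin m)) :
    (Fin.cons a z : Fin (m + 1) → V) ∘ Perm.decomposeFin.symm (0, τ) = Fin.cons a (z ∘ τ) := by
  funext l
  cases l using Fin.cases <;> simp

theorem cons_comp_decomposeFin_symm_symm (a : V) (z : Fin m → V) (τ : Perm (Fin m)) :
    (Fin.cons a z : Fin (m + 1) → V) ∘ (Perm.decomposeFin.symm (0, τ)).symm =
      Fin.cons a (z ∘ τ.symm) := by
  rw [Equiv.comp_symm_eq, cons_comp_decomposeFin_symm, Function.comp_assoc, Equiv.symm_comp_self,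
    Function.comp_id]

theorem alternation_succ (G : (Fin (m + 1) → V) → M) (x : Fin (m + 1) → V) :
    alternation G x = ∑ p : Fin (m + 1),
      (-1 : ℤ) ^ (p : ℕ) • alternation (fun z => G (Fin.cons (x p) z)) (p.removeNth x) := by
  rw [alternation_apply,
    sum_perm_eq_sum_sum_mul_decomposeFin_symm (c := fun p => p.cycleRange.symm) (by simp)]
  refine Finset.sum_congr rfl fun p _ => ?_
  rw [alternation_apply, Finset.smul_sum]
  refine Finset.sum_congr rfl fun τ _ => ?_
  rw [smul_smul, Perm.coe_mul, ← Function.comp_assoc,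
    ← Fin.cons_removeNth_eq_comp_cycleRange_symm, cons_comp_decomposeFin_symm]
  simp [Perm.sign_mul]

theorem sum_sum_dite_lt {R : Type*} [AddCommMonoid R] (F : ∀ i j : Fin (k + 2), i < j → R) :
    (∑ i, ∑ j, if h : i < j then F i j h else 0) =
      ∑ i : Fin (k + 1), ∑ j : Fin (k + 1),
        if h : i ≤ j then F i.castSucc j.succ (Fin.castSucc_lt_succ_iff.2 h) else 0 := by
  rw [Fin.sum_univ_castSucc]
  simp [Fin.sum_univ_succ (n := k + 1), (Fin.le_last _).not_gt]

theorem alternation_succ_succ (G : V → V → (Fin k → V) → M) (x : Fin (k + 2) → V) :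
    alternation (fun y => G (y 0) (y 1) fun l => y l.succ.succ) x =
      -∑ i : Fin (k + 2), ∑ j : Fin (k + 2),
        if _h : i < j then
          (-1 : ℤ) ^ ((i : ℕ) + (j : ℕ)) • alternation (G (x i) (x j) - G (x j) (x i))
            ((⟨i, by omega⟩ : Fin (k + 1)).removeNth (j.removeNth x))
        else 0 := by
  rw [sum_sum_dite_lt (F := fun i j _ => (-1 : ℤ) ^ ((i : ℕ) + (j : ℕ)) •
    alternation (G (x i) (x j) - G (x j) (x i))
      ((⟨i, by omega⟩ : Fin (k + 1)).removeNth (j.removeNth x)))]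
  simp only [alternation_succ, Finset.smul_sum]
  rw [Fin.sum_sum_eq_sum_triangle_add, ← Finset.sum_neg_distrib]
  refine Finset.sum_congr rfl fun i _ => ?_
  rw [← Finset.sum_neg_distrib, ← Finset.filter_le_eq_Ici, Finset.sum_filter]
  refine Finset.sum_congr rfl fun j _ => ?_
  split_ifs with hij
  swap
  · rw [neg_zero]
  have first : i.castSucc.removeNth x j = x j.succ := by
    simp [Fin.removeNth_apply, Fin.succAbove_of_le_castSucc, hij]
  have second : j.succ.removeNth x i = x i.castSucc := by
    simp [Fin.removeNth_apply, Fin.succAbove_of_castSucc_lt, hij]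
  have rest : j.removeNth (i.castSucc.removeNth x) = i.removeNth (j.succ.removeNth x) := by
    rw [Fin.removeNth_removeNth_eq_swap]
    simp [Fin.predAbove, not_lt.2 hij, Fin.succAbove]
  have cons_one (a b : V) (z : Fin k → V) :
      (Fin.cons a (Fin.cons b z : Fin (k + 1) → V) : Fin (k + 2) → V) 1 = b := rfl
  simp only [first, second, rest, cons_one, Fin.cons_zero, Fin.cons_succ, Fin.val_castSucc,
    Fin.val_succ, Fin.eta, map_sub, Pi.sub_apply, pow_succ, pow_add, mul_neg, mul_one, neg_smul,
    mul_smul, smul_sub, smul_comm ((-1 : ℤ) ^ (j : ℕ)) ((-1 : ℤ) ^ (i : ℕ))]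
  abel

end Alternation

section CyclicInvariance

variable {V M : Type*} {m k : ℕ}

theorem sign_finCycle_of_even (hm : Even m) (j : Fin (m + 1)) : Perm.sign (finCycle j) = 1 := by
  have hpow : finCycle j = finRotate (m + 1) ^ (j : ℕ) := by
    rw [← DFunLike.coe_fn_eq, Perm.coe_pow, finCycle_eq_finRotate_iterate]
  rw [hpow, map_pow, sign_finRotate, Nat.add_sub_cancel, hm.neg_one_pow, one_pow]

/-- A function of tuples is cyclically invariant if it does not change when the entries of the tuple
are rotated by one place. -/
def IsCyclicallyInvariant (T : (Fin m → V) → M) : Prop :=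
  ∀ x, T (x ∘ finRotate m) = T x

theorem IsCyclicallyInvariant.comp_finCycle {T : (Fin m → V) → M} (hT : IsCyclicallyInvariant T)
    (j : Fin m) (x : Fin m → V) : T (x ∘ finCycle j) = T x := by
  rw [finCycle_eq_finRotate_iterate]
  induction (j : ℕ) with
  | zero => rfl
  | succ N ih => rw [Function.iterate_succ, ← Function.comp_assoc, hT, ih]

theorem IsCyclicallyInvariant.comp_finCycle_symm {T : (Fin m → V) → M}
    (hT : IsCyclicallyInvariant T) (j : Fin m) (x : Fin m → V) :
    T (x ∘ (finCycle j).symm) = T x := by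
  rw [← hT.comp_finCycle j, Function.comp_assoc, Equiv.symm_comp_self, Function.comp_id]

variable [AddCommGroup M]

theorem alternation_sum_comp_finCycle (hk : Even k) (T : (Fin (k + 1) → V) → M)
    (x : Fin (k + 1) → V) :
    alternation (fun y => ∑ j, T (y ∘ finCycle j)) x = (k + 1) • alternation T x := by
  have hsum : (fun y => ∑ j, T (y ∘ finCycle j)) = ∑ j, fun y => T (y ∘ finCycle j) := by
    ext; simp
  simp only [hsum, map_sum, Finset.sum_apply, alternation_precomp_perm, sign_finCycle_of_even hk,
    Units.val_one, one_smul, Fin.sum_const]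

theorem IsCyclicallyInvariant.alternation_eq_zero [IsAddTorsionFree M] {T : (Fin (m + 1) → V) → M}
    (hT : IsCyclicallyInvariant T) (hm : Odd m) (x : Fin (m + 1) → V) : alternation T x = 0 := by
  have h := alternation_precomp_perm (finRotate (m + 1)) T x
  rw [sign_finRotate, Nat.add_sub_cancel, hm.neg_one_pow, funext hT, Units.val_neg, Units.val_one,
    neg_one_smul] at h
  exact self_eq_neg.1 h

theorem IsCyclicallyInvariant.alternation_cons {T : (Fin (k + 1) → V) → M}
    (hT : IsCyclicallyInvariant T) (hk : Even k) (a : V) (z : Fin k → V) :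
    alternation T (Fin.cons a z) = (k + 1) • alternation (fun y => T (Fin.cons a y)) z := by
  have summand (p : Fin (k + 1)) (τ : Perm (Fin k)) :
      (Perm.sign (finCycle p * Perm.decomposeFin.symm (0, τ)) : ℤ) •
          T (Fin.cons a z ∘ (finCycle p * Perm.decomposeFin.symm (0, τ)).symm) =
        (Perm.sign τ : ℤ) • T (Fin.cons a (z ∘ τ.symm)) := by
    rw [Perm.mul_def, Equiv.symm_trans, Equiv.coe_trans, ← Function.comp_assoc,
      hT.comp_finCycle_symm, cons_comp_decomposeFin_symm_symm, ← Perm.mul_def, Perm.sign_mul,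
      sign_finCycle_of_even hk, Perm.decomposeFin.symm_sign, if_pos rfl, one_mul, one_mul]
  rw [alternation_apply_symm, alternation_apply_symm,
    sum_perm_eq_sum_sum_mul_decomposeFin_symm (c := finCycle) (by simp)]
  simp only [summand, Fin.sum_const]

end CyclicInvariance

section Trace

variable {A M : Type*} {m k : ℕ}

theorem isCyclicallyInvariant_trace_list_prod [Monoid A] {tr : A → M}
    (htr : ∀ a b, tr (a * b) = tr (b * a)) :
    IsCyclicallyInvariant fun B : Fin m → A => tr (List.ofFn B).prod := by
  intro B
  cases m with
  | zero => rfl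
  | succ m =>
    dsimp only
    rw [List.ofFn_succ', List.ofFn_succ (f := B), List.concat_eq_append, List.prod_append,
      List.prod_cons, htr]
    simp

variable [Ring A]

theorem derivation_list_prod {D : A →+ A} (hD : ∀ a b, D (a * b) = D a * b + a * D b)
    (B : Fin m → A) :
    D (List.ofFn B).prod = ∑ j, (List.ofFn (Function.update B j (D (B j)))).prod := by
  induction m with
  | zero => simpa using hD 1 1
  | succ m ih =>
    have update_tail (j : Fin m) (b : A) :
        (fun l : Fin m => Function.update B j.succ b l.succ) =
          Function.update (fun l => B l.succ) j b :=
      Function.update_comp_eq_of_injective B (Fin.succ_injective m) j b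
    simp [List.ofFn_succ, Fin.sum_univ_succ, hD, ih, Finset.mul_sum, update_tail,
      Function.update_of_ne (Fin.succ_ne_zero _).symm]

theorem trace_derivation_list_prod [AddCommMonoid M] {tr : A →+ M}
    (htr : ∀ a b, tr (a * b) = tr (b * a)) {D : A →+ A}
    (hD : ∀ a b, D (a * b) = D a * b + a * D b) (B : Fin (k + 1) → A) :
    tr (D (List.ofFn B).prod) =
      ∑ j, tr (D (B j) * (List.ofFn fun l : Fin k => B (l.succ + j)).prod) := by
  rw [derivation_list_prod hD, map_sum]
  refine Finset.sum_congr rfl fun j _ => ?_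
  rw [← (isCyclicallyInvariant_trace_list_prod htr).comp_finCycle j]
  simp [List.ofFn_succ]

end Trace

section ChevalleyEilenberg

variable {V A M : Type*} [Ring A] [AddCommGroup M] {m k : ℕ}

/-- The Chevalley–Eilenberg differential on cochains of positive degree, for an arbitrary operation
`bracket` on `V` and an arbitrary family `ρ` of endomorphisms of the coefficients `M`. -/
def ceDifferential (ρ : V → M →+ M) (bracket : V → V → V) (φ : (Fin (k + 1) → V) → M)
    (x : Fin (k + 2) → V) : M :=
  (∑ i : Fin (k + 2), (-1 : ℤ) ^ (i : ℕ) • ρ (x i) (φ (i.removeNth x))) +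
    ∑ i : Fin (k + 2), ∑ j : Fin (k + 2),
      if _h : i < j then
        (-1 : ℤ) ^ ((i : ℕ) + (j : ℕ)) • φ (Fin.cons (bracket (x i) (x j))
          ((⟨i, by omega⟩ : Fin (k + 1)).removeNth (j.removeNth x)))
      else 0

/-- The cochain `(X₁, …, X_m) ↦ tr (JX₁ ⋯ JX_m)`, before antisymmetrisation. -/
def traceWord (tr : A →+ M) (J : V → A) (x : Fin m → V) : M :=
  tr (List.ofFn fun l => J (x l)).prod

/-- The cochain `(Z₁, …, Z_k) ↦ tr ((X·JY + JX JY) JZ₁ ⋯ JZ_k)`, where `X` acts by `D X`. For a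
Maurer–Cartan form `J`, its antisymmetrisation in `X` and `Y` is `tr (J⁅X, Y⁆ JZ₁ ⋯ JZ_k)`. -/
def bracketWord (tr : A →+ M) (D : V → A →+ A) (J : V → A) (X Y : V) (z : Fin k → V) : M :=
  tr ((D X (J Y) + J X * J Y) * (List.ofFn fun l => J (z l)).prod)

variable {tr : A →+ M} {D : V → A →+ A} {ρ : V → M →+ M} {bracket : V → V → V} {J : V → A}

theorem isCyclicallyInvariant_traceWord (htr : ∀ a b, tr (a * b) = tr (b * a)) (J : V → A) :
    IsCyclicallyInvariant (traceWord (m := m) tr J) :=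
  fun x => isCyclicallyInvariant_trace_list_prod htr fun l => J (x l)

theorem alternation_trace_derivation_word (htr : ∀ a b, tr (a * b) = tr (b * a)) {D : A →+ A}
    (hD : ∀ a b, D (a * b) = D a * b + a * D b) (J : V → A) (hk : Even k) (x : Fin (k + 1) → V) :
    alternation (fun y : Fin (k + 1) → V => tr (D (List.ofFn fun l => J (y l)).prod)) x =
      (k + 1) • alternation
        (fun y => tr (D (J (y 0)) * (List.ofFn fun l : Fin k => J (y l.succ)).prod)) x := by
  rw [← alternation_sum_comp_finCycle hk]
  simp only [trace_derivation_list_prod htr hD, Function.comp_apply, finCycle_apply, zero_add]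

theorem sum_act_alternation_traceWord (htr : ∀ a b, tr (a * b) = tr (b * a))
    (hD : ∀ X a b, D X (a * b) = D X a * b + a * D X b) (hρ : ∀ X a, ρ X (tr a) = tr (D X a))
    (J : V → A) (hk : Even k) (x : Fin (k + 2) → V) :
    ∑ i : Fin (k + 2), (-1 : ℤ) ^ (i : ℕ) •
        ρ (x i) (alternation (traceWord (m := k + 1) tr J) (i.removeNth x)) =
      (k + 1) • alternation (fun y : Fin (k + 2) → V =>
        tr (D (y 0) (J (y 1)) * (List.ofFn fun l : Fin k => J (y l.succ.succ)).prod)) x := by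
  simp only [map_alternation, traceWord, hρ, alternation_trace_derivation_word htr (hD _) J hk]
  rw [alternation_succ, Finset.smul_sum]
  exact Finset.sum_congr rfl fun i _ => smul_comm _ _ _

theorem alternation_traceWord_cons_bracket (htr : ∀ a b, tr (a * b) = tr (b * a))
    (hJ : ∀ X Y, J (bracket X Y) = D X (J Y) - D Y (J X) + (J X * J Y - J Y * J X))
    (hk : Even k) (X Y : V) (z : Fin k → V) :
    alternation (traceWord tr J) (Fin.cons (bracket X Y) z) =
      (k + 1) • alternation (bracketWord tr D J X Y - bracketWord tr D J Y X) z := by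
  have word_eq :
      (fun y : Fin k → V => traceWord tr J (Fin.cons (bracket X Y) y : Fin (k + 1) → V)) =
        bracketWord tr D J X Y - bracketWord tr D J Y X := by
    funext y
    rw [Pi.sub_apply, bracketWord, bracketWord, ← map_sub, ← sub_mul, add_sub_add_comm, ← hJ]
    simp [traceWord, List.ofFn_succ]
  rw [(isCyclicallyInvariant_traceWord htr J).alternation_cons hk, word_eq]

theorem sum_alternation_traceWord_bracket (htr : ∀ a b, tr (a * b) = tr (b * a))
    (hJ : ∀ X Y, J (bracket X Y) = D X (J Y) - D Y (J X) + (J X * J Y - J Y * J X))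
    (hk : Even k) (x : Fin (k + 2) → V) :
    (∑ i : Fin (k + 2), ∑ j : Fin (k + 2),
      if _h : i < j then
        (-1 : ℤ) ^ ((i : ℕ) + (j : ℕ)) • alternation (traceWord tr J)
          (Fin.cons (bracket (x i) (x j))
            ((⟨i, by omega⟩ : Fin (k + 1)).removeNth (j.removeNth x)) : Fin (k + 1) → V)
      else 0) =
      -((k + 1) • alternation (fun y : Fin (k + 2) → V =>
        bracketWord tr D J (y 0) (y 1) fun l : Fin k => y l.succ.succ) x) := by
  rw [alternation_succ_succ, smul_neg, neg_neg]
  simp only [alternation_traceWord_cons_bracket htr hJ hk, Finset.smul_sum, smul_dite, smul_zero,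
    smul_comm (k + 1)]

theorem ceDifferential_alternation_traceWord [IsAddTorsionFree M]
    (htr : ∀ a b, tr (a * b) = tr (b * a)) (hD : ∀ X a b, D X (a * b) = D X a * b + a * D X b)
    (hρ : ∀ X a, ρ X (tr a) = tr (D X a))
    (hJ : ∀ X Y, J (bracket X Y) = D X (J Y) - D Y (J X) + (J X * J Y - J Y * J X))
    (hk : Even k) :
    ceDifferential ρ bracket (alternation (traceWord (m := k + 1) tr J)) = 0 := by
  funext x
  have split :
      (fun y : Fin (k + 2) → V => bracketWord tr D J (y 0) (y 1) fun l => y l.succ.succ) =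
        (fun y => tr (D (y 0) (J (y 1)) * (List.ofFn fun l => J (y l.succ.succ)).prod)) +
          traceWord tr J := by
    funext y
    simp [bracketWord, traceWord, List.ofFn_succ, add_mul, mul_assoc]
  have even_vanishes : alternation (traceWord (m := k + 2) tr J) x = 0 :=
    (isCyclicallyInvariant_traceWord htr J).alternation_eq_zero hk.add_one x
  rw [ceDifferential, sum_act_alternation_traceWord htr hD hρ J hk,
    sum_alternation_traceWord_bracket htr hJ hk, split, map_add, Pi.add_apply, even_vanishes,
    add_zero, add_neg_cancel, Pi.zero_apply]

end ChevalleyEilenberg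

section Derivations

theorem matrix_map_derivation_mul {R S ι : Type*} [CommSemiring R] [CommSemiring S] [Algebra R S]
    [Fintype ι] (D : Derivation R S S) (P Q : Matrix ι ι S) :
    (P * Q).map D = P.map D * Q + P * Q.map D := by
  ext i j
  simp only [Matrix.map_apply, Matrix.mul_apply, Matrix.add_apply, map_sum, Derivation.leibniz,
    smul_eq_mul, ← Finset.sum_add_distrib]
  exact Finset.sum_congr rfl fun l _ => by ring

theorem pderiv_comm {σ R : Type*} [CommSemiring R] (i j : σ) (f : MvPowerSeries σ R) :
    pderiv R i (pderiv R j f) = pderiv R j (pderiv R i f) := by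
  ext d
  rw [coeff_pderiv, coeff_pderiv, coeff_pderiv, coeff_pderiv, add_right_comm]
  obtain rfl | hij := eq_or_ne i j
  · rfl
  · simp [hij, hij.symm, mul_right_comm]

end Derivations

section FormalVectorFields

variable {n : ℕ}

theorem pd_eq_pderiv (i : Fin n) (f : O n) : pd i f = pderiv ℂ i f := by
  ext d
  rw [coeff_pderiv, mul_comm]
  rfl

/-- The derivation `f ↦ X·f` of `O` given by a formal vector field `X`. -/
noncomputable def actDerivation (X : Vn n) : Derivation ℂ (O n) (O n) :=
  ∑ i, X i • pderiv ℂ i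

theorem actDerivation_apply (X : Vn n) (f : O n) : actDerivation X f = act X f := by
  simp only [act, actDerivation, pd_eq_pderiv]
  rw [← Derivation.coeFnAddMonoidHom_apply, map_sum, Finset.sum_apply]
  rfl

/-- The entrywise action of a formal vector field on `gl(n, O)`. -/
noncomputable def matrixAct (X : Vn n) :
    Matrix (Fin n) (Fin n) (O n) →+ Matrix (Fin n) (Fin n) (O n) :=
  (actDerivation X : O n →+ O n).mapMatrix

theorem matrixAct_mul (X : Vn n) (P Q : Matrix (Fin n) (Fin n) (O n)) :
    matrixAct X (P * Q) = matrixAct X P * Q + P * matrixAct X Q :=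
  matrix_map_derivation_mul (actDerivation X) P Q

theorem actDerivation_trace (X : Vn n) (P : Matrix (Fin n) (Fin n) (O n)) :
    actDerivation X P.trace = (matrixAct X P).trace :=
  AddMonoidHom.map_trace (actDerivation X : O n →+ O n) P

theorem Jac_br (X Y : Vn n) :
    Jac (br X Y) =
      matrixAct X (Jac Y) - matrixAct Y (Jac X) + (Jac X * Jac Y - Jac Y * Jac X) := by
  ext1 i j
  have matrixAct_Jac (U W : Vn n) : matrixAct U (Jac W) i j = act U (Jac W i j) :=
    actDerivation_apply U _
  simp only [matrixAct_Jac, Jac, br, act, Matrix.add_apply, Matrix.sub_apply, Matrix.mul_apply,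
    pd_eq_pderiv, map_sum, map_sub, Derivation.leibniz, smul_eq_mul, pderiv_comm i,
    ← Finset.sum_add_distrib, ← Finset.sum_sub_distrib]
  exact Finset.sum_congr rfl fun l _ => by ring

theorem dCEO_eq_ceDifferential {k : ℕ} (φ : (Fin (k + 1) → Vn n) → O n) :
    dCEO φ = ceDifferential (fun X => (actDerivation X : O n →+ O n)) br φ := by
  funext x
  simp [dCEO, ceDifferential, actDerivation_apply]

theorem aCochain_succ (l : ℕ) :
    aCochain (n := n) (l + 1) =
      alternation (traceWord (m := 2 * l + 1) (Matrix.traceAddMonoidHom (Fin n) (O n)) Jac) :=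
  rfl

end FormalVectorFields

/-- aᵢ is a cocycle: d_CE aᵢ = 0 in C^{2i}(vect(n); O). -/
theorem stmt8 (n : ℕ) (i : ℕ) (hi : 1 ≤ i) :
    dCEO (n := n) (aCochain i) = 0 := by
  have : IsAddTorsionFree (O n) := .of_isTorsionFree ℂ _
  obtain ⟨l, rfl⟩ : ∃ l, i = l + 1 := ⟨i - 1, by omega⟩
  rw [aCochain_succ]
  exact (dCEO_eq_ceDifferential _).trans <|
    ceDifferential_alternation_traceWord Matrix.trace_mul_comm matrixAct_mul actDerivation_trace
      Jac_br (even_two_mul l)
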